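/- There exist families of ML-formulae (ψ_i)_{i∈ℕ} and (ψ'_i)_{i∈ℕ} such that: (1) the sizes of ψ_i and ψ'_i are polynomial in i; (2) sig(ψ_i) = {a, b_0, …, b_{i−1}} and sig(ψ'_i) = {a, c}; (3) for every i ∈ ℕ, all M, M' ∈ T^3 with M ⊨ ψ_i and M' ⊨ ψ'_i, every signature τ with a ∈ τ and {c, b_0, …, b_{i−1}} ∩ τ = ∅, and every (τ,ℓ)-bisimulation Z witnessing M ≈^ℓ_τ M' for some ℓ ≥ i, there are points w_0, …, w_{2^i−1} at depth i in M and a point ŵ at depth i in M' such that (a) (w_j, ŵ) ∈ Z for all j, (b) all w_j and ŵ satisfy a, and (c) any two distinct w_j, w_k are distinguished by some proposition among b_0, …, b_{i−1}. -/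

import Mathlib

/-- Formulae of the modal μ-calculus (in negation normal form). -/
inductive Form : Type
  | pos : ℕ → Form
  | neg : ℕ → Form
  | or  : Form → Form → Form
  | and : Form → Form → Form
  | dia : Form → Form
  | box : Form → Form
  | var : ℕ → Form
  | mu  : ℕ → Form → Form
  | nu  : ℕ → Form → Form

namespace Form

/-- Fixpoint-free formulae: modal logic ML. -/
def IsML : Form → Prop
  | pos _ => True
  | neg _ => True
  | or φ ψ => IsML φ ∧ IsML ψ
  | and φ ψ => IsML φ ∧ IsML ψ
  | dia φ => IsML φ
  | box φ => IsML φ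
  | var _ => False
  | mu _ _ => False
  | nu _ _ => False

/-- Modal depth: maximal nesting of ◇ and □. -/
def depth : Form → ℕ
  | pos _ => 0
  | neg _ => 0
  | or φ ψ => max φ.depth ψ.depth
  | and φ ψ => max φ.depth ψ.depth
  | dia φ => φ.depth + 1
  | box φ => φ.depth + 1
  | var _ => 0
  | mu _ φ => φ.depth
  | nu _ φ => φ.depth

/-- The set of propositions occurring in a formula. -/
def sig : Form → Set ℕ
  | pos p => {p}
  | neg p => {p}
  | or φ ψ => φ.sig ∪ ψ.sig
  | and φ ψ => φ.sig ∪ ψ.sig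
  | dia φ => φ.sig
  | box φ => φ.sig
  | var _ => ∅
  | mu _ φ => φ.sig
  | nu _ φ => φ.sig

/-- The size of a formula (its length as a string, up to a constant factor). -/
def size : Form → ℕ
  | pos _ => 1
  | neg _ => 2
  | or φ ψ => φ.size + ψ.size + 1
  | and φ ψ => φ.size + ψ.size + 1
  | dia φ => φ.size + 1
  | box φ => φ.size + 1
  | var _ => 1
  | mu _ φ => φ.size + 2
  | nu _ φ => φ.size + 2

end Form

/-- A set has at least `g` elements. -/
def AtLeastCard {W : Type} (g : ℕ) (S : Set W) : Prop :=
  ∃ f : Fin g → W, Function.Injective f ∧ ∀ i, f i ∈ S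

/-- Pointed Kripke structures. -/
structure Model : Type 1 where
  W : Type
  root : W
  R : W → W → Prop
  val : W → ℕ → Prop

namespace Model

/-- Semantics of the μ-calculus, via Knaster–Tarski style clauses. -/
def interp (M : Model) : Form → (ℕ → Set M.W) → Set M.W
  | .pos p, _ => {w | M.val w p}
  | .neg p, _ => {w | ¬ M.val w p}
  | .or φ ψ, e => M.interp φ e ∪ M.interp ψ e
  | .and φ ψ, e => M.interp φ e ∩ M.interp ψ e
  | .dia φ, e => {w | ∃ v, M.R w v ∧ v ∈ M.interp φ e}
  | .box φ, e => {w | ∀ v, M.R w v → v ∈ M.interp φ e}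
  | .var x, e => e x
  | .mu x φ, e => sInf {S : Set M.W | M.interp φ (Function.update e x S) ⊆ S}
  | .nu x φ, e => sSup {S : Set M.W | S ⊆ M.interp φ (Function.update e x S)}

/-- `M ⊨ φ`: the root of `M` satisfies `φ`. -/
def Sat (M : Model) (φ : Form) : Prop := M.root ∈ M.interp φ fun _ => ∅

/-- Points reachable from the root in exactly `k` steps (in a tree: points of depth `k`). -/
def stepsTo (M : Model) : ℕ → M.W → Prop
  | 0, w => w = M.root
  | (k+1), w => ∃ v, M.stepsTo k v ∧ M.R v w

/-- Membership in the `n`-prefix: depth at most `n`. -/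
def InPrefix (M : Model) (n : ℕ) (w : M.W) : Prop := ∃ k ≤ n, M.stepsTo k w

/-- Tree models: every point is reachable from the root, the root has no predecessor,
and every point has at most one predecessor. -/
def IsTree (M : Model) : Prop :=
  (∀ w, Relation.ReflTransGen M.R M.root w) ∧
  (∀ w, ¬ M.R w M.root) ∧
  (∀ w v v', M.R v w → M.R v' w → v = v')

/-- Outdegree at most `d`. -/
def outdegLE (M : Model) (d : ℕ) : Prop :=
  ∀ w, ¬ AtLeastCard (d+1) {v | M.R w v}

end Model

/-- The class `T^d` of all tree models of outdegree at most `d`. -/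
def TreeC (d : ℕ) : Set Model := {M | M.IsTree ∧ M.outdegLE d}

/-- `(σ,n)`-bisimulations: bisimulations between the `n`-prefixes of the `σ`-reducts,
relating only points of equal depth and linking the roots. -/
structure IsNBisim (M M' : Model) (σ : Set ℕ) (n : ℕ) (Z : M.W → M'.W → Prop) : Prop where
  root : Z M.root M'.root
  depthEq : ∀ ⦃w w'⦄, Z w w' → ∃ k ≤ n, M.stepsTo k w ∧ M'.stepsTo k w'
  base : ∀ ⦃w w'⦄, Z w w' → ∀ p ∈ σ, (M.val w p ↔ M'.val w' p)
  forth : ∀ ⦃w w'⦄, Z w w' → ∀ k, k < n → M.stepsTo k w →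
      ∀ v, M.R w v → ∃ v', M'.R w' v' ∧ Z v v'
  back : ∀ ⦃w w'⦄, Z w w' → ∀ k, k < n → M'.stepsTo k w' →
      ∀ v', M'.R w' v' → ∃ v, M.R w v ∧ Z v v'

/-- `(σ,n)`-isomorphisms: `(σ,n)`-bisimulations bijective on the `n`-prefixes. -/
def IsNIso (M M' : Model) (σ : Set ℕ) (n : ℕ) (Z : M.W → M'.W → Prop) : Prop :=
  IsNBisim M M' σ n Z ∧
  (∀ w w₁' w₂', Z w w₁' → Z w w₂' → w₁' = w₂') ∧
  (∀ w₁ w₂ w', Z w₁ w' → Z w₂ w' → w₁ = w₂) ∧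
  (∀ w, M.InPrefix n w → ∃ w', Z w w') ∧
  (∀ w', M'.InPrefix n w' → ∃ w, Z w w')

/-- `M ≈ⁿ_σ M'`. -/
def NBisimEq (M M' : Model) (σ : Set ℕ) (n : ℕ) : Prop := ∃ Z, IsNBisim M M' σ n Z

/-- `M ≅ⁿ_σ M'`. -/
def NIsoEq (M M' : Model) (σ : Set ℕ) (n : ℕ) : Prop := ∃ Z, IsNIso M M' σ n Z

/-- `ψ` separates `φ` from `φ'` over the class `C`: `φ ⊨ ψ` and `ψ ⊨ ¬φ'` over `C`. -/
def Separates (C : Set Model) (ψ φ φ' : Form) : Prop :=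
  (∀ M ∈ C, M.Sat φ → M.Sat ψ) ∧ (∀ M ∈ C, M.Sat ψ → ¬ M.Sat φ')

/-!
In a model of `ψ'_n` of outdegree at most three, the root and every point at depth less than `n`
that is reached through `a`-points have two successors outside `a`, which `c` tells apart; this
leaves room for only one successor in `a`, so at most one path of length `n` stays in `a`. In a
model of `ψ_n` the paths of length `n` that stay in `a` realize all `2 ^ n` patterns of `b_0, …,
b_{n-1}` at their endpoints. A bisimulation respecting `a` carries paths that stay in `a` to paths
that stay in `a`, so all these endpoints are related to the same point.
-/

namespace Form

/-- The formula `ψ_n`: the paths of length `n` in `a` branch at every step. The branch taken when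
`m + 1` steps remain is announced by `b m` at depth `n`; guarding this by `m` boxes, rather than
nesting the rest of the formula below both diamonds, keeps the size quadratic in `n`. -/
def branching (a : ℕ) (b : ℕ → ℕ) : ℕ → Form
  | 0 => pos a
  | n + 1 =>
    and (and (dia (and (pos a) (box^[n] (pos (b n))))) (dia (and (pos a) (box^[n] (neg (b n))))))
      (box (or (neg a) (branching a b n)))

/-- The formula `ψ'_n`: for `n` steps inside `a`, every point has two successors outside `a`, told
apart by `c`. The case `n = 0` only serves to have both propositions in the signature. -/
def crowding (a c : ℕ) : ℕ → Form
  | 0 => and (pos a) (or (pos c) (neg c))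
  | n + 1 =>
    and (and (dia (and (neg a) (pos c))) (dia (and (neg a) (neg c))))
      (box (or (neg a) (crowding a c n)))

theorem isML_box_iterate (n : ℕ) {φ : Form} (hφ : φ.IsML) : (box^[n] φ).IsML := by
  induction n with
  | zero => exact hφ
  | succ n ih => rwa [Function.iterate_succ_apply', IsML]

theorem size_box_iterate (n : ℕ) (φ : Form) : (box^[n] φ).size = φ.size + n := by
  induction n with
  | zero => rfl
  | succ n ih => rw [Function.iterate_succ_apply', size, ih, Nat.add_assoc]

theorem sig_box_iterate (n : ℕ) (φ : Form) : (box^[n] φ).sig = φ.sig := by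
  induction n with
  | zero => rfl
  | succ n ih => rw [Function.iterate_succ_apply', sig, ih]

theorem isML_branching (a : ℕ) (b : ℕ → ℕ) : ∀ n, (branching a b n).IsML
  | 0 => trivial
  | n + 1 =>
    ⟨⟨⟨trivial, isML_box_iterate n (φ := pos (b n)) trivial⟩,
      ⟨trivial, isML_box_iterate n (φ := neg (b n)) trivial⟩⟩, trivial, isML_branching a b n⟩

theorem isML_crowding (a c : ℕ) : ∀ n, (crowding a c n).IsML
  | 0 => ⟨trivial, trivial, trivial⟩
  | n + 1 => ⟨⟨⟨trivial, trivial⟩, trivial, trivial⟩, trivial, isML_crowding a c n⟩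

theorem size_branching (a : ℕ) (b : ℕ → ℕ) (n : ℕ) :
    (branching a b n).size = n ^ 2 + 14 * n + 1 := by
  induction n with
  | zero => rfl
  | succ n ih =>
    simp only [branching, size, size_box_iterate, ih]
    ring

theorem size_crowding (a c n : ℕ) : (crowding a c n).size = 17 * n + 6 := by
  induction n with
  | zero => rfl
  | succ n ih =>
    simp only [crowding, size, ih]
    ring

theorem sig_branching (a : ℕ) (b : ℕ → ℕ) (n : ℕ) :
    (branching a b n).sig = {a} ∪ {q | ∃ j < n, q = b j} := by
  induction n with
  | zero => simp [branching, sig]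
  | succ n ih =>
    ext q
    simp only [branching, sig, sig_box_iterate, ih, Nat.exists_lt_succ_right, Set.mem_union,
      Set.mem_singleton_iff, Set.mem_ofPred_eq]
    grind

theorem sig_crowding (a c n : ℕ) : (crowding a c n).sig = {a, c} := by
  induction n with
  | zero => simp only [crowding, sig, Set.union_self, Set.singleton_union]
  | succ n ih => simp only [crowding, sig, ih, Set.singleton_union, Set.union_self, Set.insert_idem]

end Form

namespace Model

/-- `M.PathIn a n w v`: there is a path of length `n` from `w` to `v` all of whose points, except
possibly `w`, satisfy the proposition `a`. -/
def PathIn (M : Model) (a : ℕ) : ℕ → M.W → M.W → Prop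
  | 0, w, v => w = v
  | n + 1, w, v => ∃ u, M.R w u ∧ M.val u a ∧ M.PathIn a n u v

variable {M : Model} {a : ℕ}

theorem PathIn.stepsTo {n k : ℕ} {w v : M.W} (hw : M.stepsTo k w) (h : M.PathIn a n w v) :
    M.stepsTo (k + n) v := by
  induction n generalizing k w with
  | zero =>
    obtain rfl : w = v := h
    exact hw
  | succ n ih =>
    obtain ⟨u, hwu, -, huv⟩ := h
    rw [← Nat.succ_add_eq_add_succ]
    exact ih ⟨w, hw, hwu⟩ huv

theorem PathIn.mem_interp_of_box_iterate {n : ℕ} {w v : M.W} {φ : Form} {e : ℕ → Set M.W}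
    (h : M.PathIn a n w v) (hw : w ∈ M.interp (Form.box^[n] φ) e) : v ∈ M.interp φ e := by
  induction n generalizing w with
  | zero =>
    obtain rfl : w = v := h
    exact hw
  | succ n ih =>
    obtain ⟨u, hwu, -, huv⟩ := h
    rw [Function.iterate_succ_apply'] at hw
    exact ih huv (hw u hwu)

theorem exists_pathIn_of_mem_branching {b : ℕ → ℕ} {n : ℕ} {w : M.W} {e : ℕ → Set M.W}
    (hw : w ∈ M.interp (.branching a b n) e) (S : Set ℕ) :
    ∃ v, M.PathIn a n w v ∧ M.val v a ∧ ∀ m < n, (M.val v (b m) ↔ m ∈ S) := by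
  induction n generalizing w with
  | zero => exact ⟨w, rfl, hw, by simp⟩
  | succ n ih =>
    obtain ⟨⟨⟨u₁, hwu₁, hu₁, hbox₁⟩, ⟨u₀, hwu₀, hu₀, hbox₀⟩⟩, hbox⟩ := hw
    have extend {u : M.W} (hwu : M.R w u) (hu : M.val u a)
        (hn : ∀ v, M.PathIn a n u v → (M.val v (b n) ↔ n ∈ S)) :
        ∃ v, M.PathIn a (n + 1) w v ∧ M.val v a ∧ ∀ m < n + 1, (M.val v (b m) ↔ m ∈ S) := by
      obtain ⟨v, huv, hv, hS⟩ := ih ((hbox u hwu).resolve_left (not_not_intro hu))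
      exact ⟨v, ⟨u, hwu, hu, huv⟩, hv, Nat.forall_lt_succ_right.2 ⟨hS, hn v huv⟩⟩
    by_cases hnS : n ∈ S
    · exact extend hwu₁ hu₁ fun v huv => iff_of_true (huv.mem_interp_of_box_iterate hbox₁) hnS
    · exact extend hwu₀ hu₀ fun v huv => iff_of_false (huv.mem_interp_of_box_iterate hbox₀) hnS

theorem exists_pairwise_distinguished_of_mem_branching {b : ℕ → ℕ} {n : ℕ} {w : M.W}
    {e : ℕ → Set M.W} (hw : w ∈ M.interp (.branching a b n) e) :
    ∃ v : Fin (2 ^ n) → M.W, (∀ j, M.PathIn a n w (v j)) ∧ (∀ j, M.val (v j) a) ∧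
      Pairwise fun j k => ∃ m < n, ¬ (M.val (v j) (b m) ↔ M.val (v k) (b m)) := by
  choose v hpath hval hpattern using fun j : Fin (2 ^ n) =>
    exists_pathIn_of_mem_branching hw {m | (BitVec.ofFin j).getLsbD m}
  refine ⟨v, hpath, hval, fun j k hjk => ?_⟩
  by_contra! hagree
  refine hjk (BitVec.ofFin.inj (BitVec.eq_of_getLsbD_eq fun m hm => Bool.eq_iff_iff.2 ?_))
  exact (hpattern j m hm).symm.trans ((hagree m hm).trans (hpattern k m hm))

theorem subsingleton_succ_of_outdegLE {d : ℕ} {w : M.W} (hM : M.outdegLE (d + 1))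
    (hw : AtLeastCard d {x | M.R w x ∧ ¬ M.val x a}) :
    {u | M.R w u ∧ M.val u a}.Subsingleton := by
  obtain ⟨f, hf, hfw⟩ := hw
  rintro u ⟨hwu, hu⟩ v ⟨hwv, hv⟩
  by_contra huv
  have not_mem_range {x : M.W} (hx : M.val x a) : x ∉ Set.range f := by
    rintro ⟨i, rfl⟩
    exact (hfw i).2 hx
  refine hM w ⟨Fin.cons u (Fin.cons v f), ?_, ?_⟩
  · simp [Fin.cons_injective_iff, Fin.range_cons, huv, hf, not_mem_range hu, not_mem_range hv]
  · exact Fin.cases hwu (Fin.cases hwv fun i => (hfw i).1)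

theorem PathIn.eq_of_mem_crowding (hM : M.outdegLE 3) {c n : ℕ} {w v₁ v₂ : M.W}
    {e : ℕ → Set M.W} (hw : w ∈ M.interp (.crowding a c n) e)
    (h₁ : M.PathIn a n w v₁) (h₂ : M.PathIn a n w v₂) : v₁ = v₂ := by
  induction n generalizing w with
  | zero => exact h₁.symm.trans h₂
  | succ n ih =>
    obtain ⟨⟨⟨x, hwx, hxa, hxc⟩, ⟨y, hwy, hya, hyc⟩⟩, hbox⟩ := hw
    obtain ⟨u, hwu, hu, huv₁⟩ := h₁
    obtain ⟨u', hwu', hu', huv₂⟩ := h₂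
    have hxy : x ≠ y := by
      rintro rfl
      exact hyc hxc
    have two_outside : AtLeastCard 2 {x | M.R w x ∧ ¬ M.val x a} :=
      ⟨![x, y], by simpa [Fin.cons_injective_iff] using hxy,
        Fin.forall_fin_two.2 ⟨⟨hwx, hxa⟩, ⟨hwy, hya⟩⟩⟩
    obtain rfl : u = u' := subsingleton_succ_of_outdegLE hM two_outside ⟨hwu, hu⟩ ⟨hwu', hu'⟩
    exact ih ((hbox u hwu).resolve_left (not_not_intro hu)) huv₁ huv₂

end Model

namespace IsNBisim

variable {M M' : Model} {τ : Set ℕ} {ℓ : ℕ} {Z : M.W → M'.W → Prop} {a : ℕ}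

theorem exists_pathIn (hZ : IsNBisim M M' τ ℓ Z) (ha : a ∈ τ) {n k : ℕ} {w v : M.W} {w' : M'.W}
    (hkn : k + n ≤ ℓ) (hk : M.stepsTo k w) (hw : Z w w') (h : M.PathIn a n w v) :
    ∃ v', M'.PathIn a n w' v' ∧ Z v v' := by
  induction n generalizing k w w' with
  | zero =>
    obtain rfl : w = v := h
    exact ⟨w', rfl, hw⟩
  | succ n ih =>
    obtain ⟨u, hwu, hu, huv⟩ := h
    obtain ⟨u', hwu', huu'⟩ := hZ.forth hw k (by omega) hk u hwu
    obtain ⟨v', huv', hvv'⟩ := ih (k := k + 1) (by omega) ⟨w, hk, hwu⟩ huu' huv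
    exact ⟨v', ⟨u', hwu', (hZ.base huu' a ha).1 hu, huv'⟩, hvv'⟩

theorem exists_common_pathIn_of_crowding (hZ : IsNBisim M M' τ ℓ Z) (ha : a ∈ τ)
    (hM' : M'.outdegLE 3) {c n : ℕ} (hn : n ≤ ℓ) (hc : M'.Sat (.crowding a c n))
    {ι : Type*} [Nonempty ι] {v : ι → M.W} (hv : ∀ j, M.PathIn a n M.root (v j)) :
    ∃ v', M'.PathIn a n M'.root v' ∧ ∀ j, Z (v j) v' := by
  choose v' hpath hrel using fun j =>
    hZ.exists_pathIn ha (k := 0) (by rwa [Nat.zero_add]) rfl hZ.root (hv j)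
  obtain ⟨i⟩ := ‹Nonempty ι›
  exact ⟨v' i, hpath i, fun j => (hpath j).eq_of_mem_crowding hM' hc (hpath i) ▸ hrel j⟩

end IsNBisim

theorem stmt_11_general (a c : ℕ) (b : ℕ → ℕ) :
    ∃ ψs ψs' : ℕ → Form,
      (∀ i, (ψs i).IsML ∧ (ψs' i).IsML) ∧
      (∃ d : ℕ, ∀ i, (ψs i).size ≤ d * (i + 1) ^ d ∧ (ψs' i).size ≤ d * (i + 1) ^ d) ∧
      (∀ i, (ψs i).sig = {a} ∪ {q | ∃ j < i, q = b j}) ∧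
      (∀ i, (ψs' i).sig = {a, c}) ∧
      (∀ i : ℕ, ∀ M M' : Model, M'.outdegLE 3 → M.Sat (ψs i) → M'.Sat (ψs' i) →
        ∀ τ : Set ℕ, a ∈ τ → ∀ ℓ, i ≤ ℓ → ∀ Z, IsNBisim M M' τ ℓ Z →
        ∃ w : Fin (2 ^ i) → M.W, ∃ what : M'.W,
          (∀ j, M.stepsTo i (w j)) ∧ M'.stepsTo i what ∧
          (∀ j, Z (w j) what) ∧
          (∀ j, M.val (w j) a) ∧ M'.val what a ∧
          (∀ j k, j ≠ k →
            ∃ p, (∃ m, m < i ∧ p = b m) ∧ ¬ (M.val (w j) p ↔ M.val (w k) p))) := by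
  refine ⟨Form.branching a b, Form.crowding a c,
    fun i => ⟨Form.isML_branching a b i, Form.isML_crowding a c i⟩, ⟨17, fun i => ?_⟩,
    Form.sig_branching a b, Form.sig_crowding a c, ?_⟩
  · have sq_le : (i + 1) ^ 2 ≤ (i + 1) ^ 17 := Nat.pow_le_pow_right i.succ_pos (by norm_num)
    rw [Form.size_branching, Form.size_crowding]
    constructor <;> nlinarith
  · intro i M M' hM' hψ hψ' τ ha ℓ hi Z hZ
    obtain ⟨w, hpath, hval, hdist⟩ := Model.exists_pairwise_distinguished_of_mem_branching hψ
    obtain ⟨what, hpath', hrel⟩ := hZ.exists_common_pathIn_of_crowding ha hM' hi hψ' hpath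
    have depth_eq {N : Model} {v : N.W} (h : N.PathIn a i N.root v) : N.stepsTo i v :=
      Nat.zero_add i ▸ h.stepsTo (k := 0) rfl
    refine ⟨w, what, fun j => depth_eq (hpath j), depth_eq hpath', hrel, hval,
      (hZ.base (hrel 0) a ha).1 (hval 0), fun j k hjk => ?_⟩
    obtain ⟨m, hm, hne⟩ := hdist hjk
    exact ⟨b m, ⟨m, hm, rfl⟩, hne⟩

/-- the gadget formulae `ψ_i, ψ'_i` (with `a = 0`, `c = 1`, `b_j = j + 2`):
polynomial size, the prescribed signatures, and the synchronizing property (3). -/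
theorem stmt_11 :
    ∃ ψs ψs' : ℕ → Form,
      (∀ i, (ψs i).IsML ∧ (ψs' i).IsML) ∧
      (∃ c : ℕ, ∀ i, (ψs i).size ≤ c * (i + 1) ^ c ∧ (ψs' i).size ≤ c * (i + 1) ^ c) ∧
      (∀ i, (ψs i).sig = ({0} : Set ℕ) ∪ {q | ∃ j < i, q = j + 2}) ∧
      (∀ i, (ψs' i).sig = ({0, 1} : Set ℕ)) ∧
      (∀ i : ℕ, ∀ M M' : Model, M ∈ TreeC 3 → M' ∈ TreeC 3 →
        M.Sat (ψs i) → M'.Sat (ψs' i) →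
        ∀ τ : Set ℕ, 0 ∈ τ → (1 : ℕ) ∉ τ → (∀ j < i, (j + 2 : ℕ) ∉ τ) →
        ∀ ℓ, i ≤ ℓ → ∀ Z, IsNBisim M M' τ ℓ Z →
        ∃ w : Fin (2 ^ i) → M.W, ∃ what : M'.W,
          (∀ j, M.stepsTo i (w j)) ∧ M'.stepsTo i what ∧
          (∀ j, Z (w j) what) ∧
          (∀ j, M.val (w j) 0) ∧ M'.val what 0 ∧
          (∀ j k, j ≠ k →
            ∃ p, (∃ m, m < i ∧ p = m + 2) ∧ ¬ (M.val (w j) p ↔ M.val (w k) p))) := by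
  obtain ⟨ψs, ψs', hML, hsize, hsig, hsig', h⟩ := stmt_11_general 0 1 (· + 2)
  exact ⟨ψs, ψs', hML, hsize, hsig, hsig', fun i M M' _ hM' hψ hψ' τ ha _ _ =>
    h i M M' hM'.2 hψ hψ' τ ha⟩
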